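/- Let n ≥ 3, let α_1, …, α_n ∈ ℝ (indices mod n) satisfy sin(α_{j+1} − α_j) ≠ 0 for all j, let P_θ be the associated perpendicular-bisector evolute matrix, and let C, S ∈ ℝⁿ be the vectors C_j = cos α_j, S_j = sin α_j. Then P_θ·C = −S and P_θ·S = C. In particular the plane span{C, S} ⊂ ℝⁿ is P_θ-invariant and the restriction of P_θ to its complexification has eigenvalues ±i. -/

import Mathlib

open Real

/-- The perpendicular-bisector evolute matrix `P_θ` associated with the cyclic
sequence of normal angles `α`. -/
noncomputable def Pmat (n : ℕ) [NeZero n] (α : Fin n → ℝ) : Matrix (Fin n) (Fin n) ℝ :=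
  Matrix.of fun j k =>
    if k = j then
      (Real.cos (α j - α (j - 1)) / Real.sin (α j - α (j - 1)) -
        Real.cos (α (j + 1) - α j) / Real.sin (α (j + 1) - α j)) / 2
    else if k = j + 1 then 1 / (2 * Real.sin (α (j + 1) - α j))
    else if k = j - 1 then -(1 / (2 * Real.sin (α j - α (j - 1))))
    else 0

/-!
`(P_θ v)_j` is the position, along the `j`-th line of the polygon with support numbers `v`, of the
midpoint of its two vertices on that line. If all lines pass through `(a, b)`, both vertices are
`(a, b)`, whose position along a line with normal `(cos α_j, sin α_j)` is
`-a sin α_j + b cos α_j`. Hence `P_θ (aC + bS) = bC - aS`: on the span of `C` and `S` the matrix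
acts as a quarter turn, with square `-1`.
-/

section QuarterTurn

variable {m R R' : Type*} [Fintype m] [CommRing R] [CommRing R'] {A : Matrix m m R} {x y : m → R}

theorem mulVec_mem_span_pair_of_quarter_turn (hx : A.mulVec x = -y) (hy : A.mulVec y = x) :
    ∀ p ∈ Submodule.span R {x, y}, A.mulVec p ∈ Submodule.span R {x, y} := by
  intro p hp
  obtain ⟨a, b, rfl⟩ := Submodule.mem_span_pair.mp hp
  rw [Matrix.mulVec_add, Matrix.mulVec_smul, Matrix.mulVec_smul, hx, hy]
  exact Submodule.mem_span_pair.mpr ⟨b, -a, by module⟩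

theorem map_mulVec_eq_smul_of_quarter_turn (f : R →+* R') {ε : R'} (hε : ε * ε = -1)
    (hx : A.mulVec x = -y) (hy : A.mulVec y = x) :
    (A.map f).mulVec (f ∘ x + ε • (f ∘ y)) = ε • (f ∘ x + ε • (f ∘ y)) := by
  have map_mulVec (v : m → R) : (A.map f).mulVec (f ∘ v) = f ∘ A.mulVec v :=
    funext fun i => (f.map_mulVec A v i).symm
  have map_neg : f ∘ (-y) = -(f ∘ y) := funext fun i => f.map_neg (y i)
  calc (A.map f).mulVec (f ∘ x + ε • (f ∘ y))
      = -(f ∘ y) + ε • (f ∘ x) := by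
        rw [Matrix.mulVec_add, Matrix.mulVec_smul, map_mulVec, map_mulVec, hx, hy, map_neg]
    _ = ε • (f ∘ x + ε • (f ∘ y)) := by
        rw [smul_add, smul_smul, hε, neg_one_smul, add_comm]

end QuarterTurn

/-- For lines with normals `(cos (α i), sin (α i))` and support numbers `v i`, the coordinate of the
intersection of the lines `j` and `k` in the direction `(-sin (α j), cos (α j))` of line `j`.
The junk value for parallel lines is `0`. -/
noncomputable def vertexCoord {ι : Type*} (α v : ι → ℝ) (j k : ι) : ℝ :=
  (v k - cos (α k - α j) * v j) / sin (α k - α j)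

theorem vertexCoord_of_concurrent {ι : Type*} (α : ι → ℝ) (a b : ℝ) {j k : ι}
    (hjk : sin (α k - α j) ≠ 0) :
    vertexCoord α (fun i => a * cos (α i) + b * sin (α i)) j k =
      -a * sin (α j) + b * cos (α j) := by
  obtain ⟨t, ht⟩ : ∃ t, α k = α j + t := ⟨α k - α j, by ring⟩
  rw [ht, add_sub_cancel_left] at hjk
  rw [vertexCoord, ht, add_sub_cancel_left, div_eq_iff hjk, cos_add, sin_add]
  ring

section Pmat

variable {n : ℕ} [NeZero n]

theorem Pmat_row_eq_single_add (hn : 3 ≤ n) (α : Fin n → ℝ) (j : Fin n) :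
    Pmat n α j =
      Pi.single j ((cos (α j - α (j - 1)) / sin (α j - α (j - 1)) -
        cos (α (j + 1) - α j) / sin (α (j + 1) - α j)) / 2) +
      Pi.single (j + 1) (1 / (2 * sin (α (j + 1) - α j))) +
      Pi.single (j - 1) (-(1 / (2 * sin (α j - α (j - 1))))) := by
  have one_ne_zero : (1 : Fin n) ≠ 0 := by
    simp [Fin.ext_iff, Nat.mod_eq_of_lt (show 1 < n by lia)]
  have one_add_one_ne_zero : (1 + 1 : Fin n) ≠ 0 := by
    simp [Fin.ext_iff, Fin.val_add, Nat.mod_eq_of_lt (show 2 < n by lia)]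
  have succ_ne : j + 1 ≠ j := by simpa using one_ne_zero
  have pred_ne : j - 1 ≠ j := by simpa using one_ne_zero
  have pred_ne_succ : j - 1 ≠ j + 1 := by
    simpa [sub_eq_iff_eq_add, add_assoc] using one_add_one_ne_zero
  ext k
  simp only [Pmat, Matrix.of_apply, Pi.add_apply, Pi.single_apply]
  grind

theorem Pmat_mulVec_apply_eq_midpoint (hn : 3 ≤ n) (α v : Fin n → ℝ) (j : Fin n) :
    (Pmat n α).mulVec v j =
      midpoint ℝ (vertexCoord α v j (j - 1)) (vertexCoord α v j (j + 1)) := by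
  have cos_swap : cos (α (j - 1) - α j) = cos (α j - α (j - 1)) := by rw [← cos_neg, neg_sub]
  have sin_swap : sin (α (j - 1) - α j) = -sin (α j - α (j - 1)) := by rw [← sin_neg, neg_sub]
  rw [Matrix.mulVec, Pmat_row_eq_single_add hn, add_dotProduct, add_dotProduct,
    single_dotProduct, single_dotProduct, single_dotProduct, midpoint_eq_smul_add, smul_eq_mul,
    vertexCoord, vertexCoord, cos_swap, sin_swap, invOf_eq_inv]
  ring

theorem Pmat_mulVec_of_concurrent (hn : 3 ≤ n) {α : Fin n → ℝ}
    (hsin : ∀ j, sin (α (j + 1) - α j) ≠ 0) (a b : ℝ) :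
    (Pmat n α).mulVec (fun j => a * cos (α j) + b * sin (α j)) =
      fun j => -a * sin (α j) + b * cos (α j) := by
  ext j
  have hpred : sin (α (j - 1) - α j) ≠ 0 := by
    rw [← neg_sub, sin_neg, neg_ne_zero]
    simpa only [sub_add_cancel] using hsin (j - 1)
  rw [Pmat_mulVec_apply_eq_midpoint hn, vertexCoord_of_concurrent α a b hpred,
    vertexCoord_of_concurrent α a b (hsin j), midpoint_self]

end Pmat

/-- With `C_j = cos α_j`, `S_j = sin α_j`, one has
`P_θ C = −S` and `P_θ S = C`; in particular `span{C,S}` is `P_θ`-invariant and the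
complexified restriction has eigenvalues `±i` (eigenvectors `C ± iS`). -/
theorem stmt_10 (n : ℕ) (hn : 3 ≤ n) [NeZero n] (α : Fin n → ℝ)
    (hsin : ∀ j : Fin n, Real.sin (α (j + 1) - α j) ≠ 0)
    (C S : Fin n → ℝ)
    (hC : ∀ j : Fin n, C j = Real.cos (α j))
    (hS : ∀ j : Fin n, S j = Real.sin (α j)) :
    ((Pmat n α).mulVec C = -S) ∧
    ((Pmat n α).mulVec S = C) ∧
    (∀ p ∈ Submodule.span ℝ ({C, S} : Set (Fin n → ℝ)),
      (Pmat n α).mulVec p ∈ Submodule.span ℝ ({C, S} : Set (Fin n → ℝ))) ∧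
    (((Pmat n α).map (Complex.ofReal)).mulVec (fun j => (C j : ℂ) + Complex.I * (S j : ℂ)) =
      Complex.I • fun j => (C j : ℂ) + Complex.I * (S j : ℂ)) ∧
    (((Pmat n α).map (Complex.ofReal)).mulVec (fun j => (C j : ℂ) - Complex.I * (S j : ℂ)) =
      (-Complex.I) • fun j => (C j : ℂ) - Complex.I * (S j : ℂ)) := by
  obtain rfl : C = fun j => cos (α j) := funext hC
  obtain rfl : S = fun j => sin (α j) := funext hS
  have hPC : (Pmat n α).mulVec (fun j => cos (α j)) = -fun j => sin (α j) := by
    simpa [Pi.neg_def] using Pmat_mulVec_of_concurrent hn hsin 1 0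
  have hPS : (Pmat n α).mulVec (fun j => sin (α j)) = fun j => cos (α j) := by
    simpa using Pmat_mulVec_of_concurrent hn hsin 0 1
  have neg_I_mul_neg_I : -Complex.I * -Complex.I = -1 := by rw [neg_mul_neg, Complex.I_mul_I]
  refine ⟨hPC, hPS, mulVec_mem_span_pair_of_quarter_turn hPC hPS,
    map_mulVec_eq_smul_of_quarter_turn Complex.ofRealHom Complex.I_mul_I hPC hPS, ?_⟩
  convert map_mulVec_eq_smul_of_quarter_turn Complex.ofRealHom neg_I_mul_neg_I hPC hPS using 2 <;>
    ext j <;> simp [sub_eq_add_neg]
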